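/- Let ρ be a Schwartz function on ℝ whose Fourier transform satisfies ρ̂(0) = 0 and ρ̂′(0) = 0 (ρ has vanishing zeroth and first moments). Define T(g)(x,y) = ∫_ℝ ρ(ξ₂ y) ℱ_y g(x, ξ₂) dξ₂ for Schwartz g on ℝ². Then for every s ≥ −1/2, ‖T(g)‖_{H^s(ℝ²)} ≲ ‖g‖_{H^s(ℝ²)}. -/

import Mathlib

open MeasureTheory ENNReal

noncomputable def jb2 (ξ : ℝ × ℝ) : ℝ := Real.sqrt (1 + ξ.1 ^ 2 + ξ.2 ^ 2)

/-- The (2d) Fourier transform. -/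
noncomputable def FT2 (u : ℝ × ℝ → ℂ) (θ : ℝ × ℝ) : ℂ :=
  ∫ p : ℝ × ℝ, Complex.exp (-Complex.I * (p.1 * θ.1 + p.2 * θ.2)) * u p

/-- The squared `H^s(ℝ²)` norm, defined via the Fourier transform. -/
noncomputable def HsNormSq (s : ℝ) (u : ℝ × ℝ → ℂ) : ℝ≥0∞ :=
  ∫⁻ θ : ℝ × ℝ, ENNReal.ofReal ((jb2 θ) ^ (2 * s) * ‖FT2 u θ‖ ^ 2)


open Filter Topology

lemma norm_ee (a b : ℝ) : ‖Complex.exp (-Complex.I * ((a:ℂ) * (b:ℂ)))‖ = 1 := by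
  have : -Complex.I * ((a:ℂ) * (b:ℂ)) = ((-(a * b) : ℝ) : ℂ) * Complex.I := by push_cast; ring
  rw [this, Complex.norm_exp_ofReal_mul_I]

lemma int_ee {f : ℝ → ℂ} (hf : Integrable f) (b : ℝ) :
    Integrable (fun y : ℝ => Complex.exp (-Complex.I * ((y:ℂ) * (b:ℂ))) * f y) := by
  refine hf.mono ?_ ?_
  · exact (Continuous.aestronglyMeasurable (by fun_prop)).mul hf.1
  · filter_upwards with y
    rw [norm_mul, norm_ee, one_mul]

lemma deriv_ee (b y : ℝ) : HasDerivAt (fun y : ℝ => Complex.exp (-Complex.I * ((y:ℂ) * (b:ℂ))))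
    (Complex.exp (-Complex.I * ((y:ℂ) * (b:ℂ))) * (-Complex.I * b)) y := by
  have h1 : HasDerivAt (fun y : ℝ => -Complex.I * ((y:ℂ) * (b:ℂ))) (-Complex.I * (1 * b)) y :=
    ((Complex.ofRealCLM.hasDerivAt).mul_const (b:ℂ)).const_mul (-Complex.I)
  simpa using h1.cexp

lemma ibp {f f' : ℝ → ℂ} (hd : ∀ y, HasDerivAt f (f' y) y) (hf : Integrable f)
    (hf' : Integrable f') (b : ℝ) :
    (∫ y : ℝ, Complex.exp (-Complex.I * ((y:ℂ) * (b:ℂ))) * f' y) =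
      (Complex.I * b) * ∫ y : ℝ, Complex.exp (-Complex.I * ((y:ℂ) * (b:ℂ))) * f y := by
  have e : ∀ y : ℝ, Complex.exp (-Complex.I * ((y:ℂ) * (b:ℂ))) * (-Complex.I * b) * f y
      = (-Complex.I * b) * (Complex.exp (-Complex.I * ((y:ℂ) * (b:ℂ))) * f y) := fun y => by ring
  rw [integral_mul_deriv_eq_deriv_mul_of_integrable
    (u' := fun y : ℝ => Complex.exp (-Complex.I * ((y:ℂ) * (b:ℂ))) * (-Complex.I * b))
    (fun x _ => deriv_ee b x) (fun x _ => hd x) (int_ee hf' b) ?_ (int_ee hf b)]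
  · simp_rw [e]
    rw [integral_const_mul]; ring
  · refine ((int_ee hf b).const_mul (-Complex.I * b)).congr ?_
    filter_upwards with y
    simp only [Pi.mul_apply]; rw [e]

noncomputable def rr (ρ : SchwartzMap ℝ ℝ) (η : ℝ) : ℂ :=
  ∫ u : ℝ, Complex.exp (-Complex.I * ((u:ℂ) * (η:ℂ))) * (ρ u : ℂ)

lemma rr_cont (ρ : SchwartzMap ℝ ℝ) : Continuous (rr ρ) := by
  unfold rr
  refine continuous_of_dominated (bound := fun u => ‖ρ u‖) ?_ ?_ ρ.integrable.norm ?_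
  · intro η
    exact (int_ee ρ.integrable.ofReal η).1
  · intro η
    filter_upwards with u
    rw [norm_mul, norm_ee, one_mul, Complex.norm_real]
  · filter_upwards with u
    fun_prop

lemma rr_decay (n : ℕ) : ∀ ρ : SchwartzMap ℝ ℝ, ∃ C, 0 ≤ C ∧ ∀ η, |η| ^ n * ‖rr ρ η‖ ≤ C := by
  induction n with
  | zero =>
    intro ρ
    refine ⟨∫ u, ‖ρ u‖, integral_nonneg fun _ => norm_nonneg _, fun η => ?_⟩
    rw [pow_zero, one_mul]
    refine (norm_integral_le_integral_norm _).trans (le_of_eq ?_)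
    congr 1; ext u
    rw [norm_mul, norm_ee, one_mul, Complex.norm_real]
  | succ n ih =>
    intro ρ
    obtain ⟨C, hC0, hC⟩ := ih (SchwartzMap.derivCLM ℝ ℝ ρ)
    refine ⟨C, hC0, fun η => ?_⟩
    have h := ibp (f := fun u => (ρ u : ℂ)) (f' := fun u => (SchwartzMap.derivCLM ℝ ℝ ρ u : ℂ))
      (fun y => by
        simpa using (ρ.differentiableAt.hasDerivAt (x := y)).ofReal_comp)
      ρ.integrable.ofReal (SchwartzMap.derivCLM ℝ ℝ ρ).integrable.ofReal η
    have h2 : ‖rr (SchwartzMap.derivCLM ℝ ℝ ρ) η‖ = |η| * ‖rr ρ η‖ := by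
      unfold rr; rw [h]; simp
    calc _ = |η| ^ n * (|η| * ‖rr ρ η‖) := by ring
      _ ≤ C := by rw [← h2]; exact hC η

lemma rr_small (ρ : SchwartzMap ℝ ℝ) (h0 : (∫ x : ℝ, ρ x) = 0) :
    ∃ C, 0 ≤ C ∧ ∀ η, ‖rr ρ η‖ ≤ C * |η| := by
  have hi : Integrable (fun u : ℝ => |u| * ‖ρ u‖) := by
    simpa using ρ.integrable_pow_mul volume 1
  refine ⟨∫ u, |u| * ‖ρ u‖, integral_nonneg fun _ => by positivity, fun η => ?_⟩
  have : rr ρ η = ∫ u : ℝ, (Complex.exp (-Complex.I * ((u:ℂ) * (η:ℂ))) - 1) * (ρ u : ℂ) := by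
    have hρ : Integrable (fun u => (ρ u : ℂ)) := ρ.integrable.ofReal
    simp_rw [sub_mul, one_mul]
    rw [integral_sub (int_ee hρ η) hρ, integral_complex_ofReal, h0]
    simp [rr]
  rw [this, ← integral_mul_const]
  refine norm_integral_le_of_norm_le (hi.mul_const _) ?_
  filter_upwards with u
  rw [norm_mul, Complex.norm_real]
  have e : -Complex.I * ((u:ℂ) * (η:ℂ)) = Complex.I * ((-(u * η) : ℝ) : ℂ) := by push_cast; ring
  have := Real.norm_exp_I_mul_ofReal_sub_one_le (x := -(u * η))
  rw [e]
  rw [norm_neg, norm_mul, Real.norm_eq_abs, Real.norm_eq_abs] at this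
  nlinarith [norm_nonneg (ρ u)]

/-- bound for `rr` used in the Schur test -/
lemma rr_bound (ρ : SchwartzMap ℝ ℝ) (h0 : (∫ x : ℝ, ρ x) = 0) (s : ℝ) (hs : -(1 / 2) ≤ s) :
    ∃ C, 0 < C ∧ ∀ η, η ≠ 0 → ‖rr ρ η‖ ≤ C * (|η| / (1 + η ^ 2)) ∧
      (1 + |η| ^ (2 * s)) * ‖rr ρ η‖ ≤ C * (1 / (1 + η ^ 2)) := by
  obtain ⟨A, hA0, hA⟩ := rr_small ρ h0
  obtain ⟨N, hN⟩ := exists_nat_ge (2 * s + 2)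
  obtain ⟨B, hB0, hB⟩ := rr_decay (N + 2) ρ
  refine ⟨4 * A + 4 * B + 1, by positivity, fun η hη => ?_⟩
  have hp : 0 < |η| := abs_pos.mpr hη
  have hsq : η ^ 2 = |η| ^ 2 := (sq_abs η).symm
  have hA := hA η
  have hB := hB η
  have hr := norm_nonneg (rr ρ η)
  rw [hsq]
  generalize |η| = t at *
  generalize ‖rr ρ η‖ = r at *
  rw [mul_div_assoc', mul_one_div, le_div_iff₀ (by positivity), le_div_iff₀ (by positivity)]
  rcases le_total t 1 with ht | ht
  · have h2 : t ^ 2 ≤ 1 := by nlinarith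
    constructor
    · nlinarith
    · have h3 : t ^ (2 * s) * t ≤ 1 := by
        rw [← Real.rpow_add_one hp.ne']
        exact Real.rpow_le_one hp.le ht (by linarith)
      have h4 : t ^ (2 * s) * r ≤ A := by
        have : 0 ≤ t ^ (2 * s) := by positivity
        calc _ ≤ t ^ (2 * s) * (A * t) := by gcongr
          _ = A * (t ^ (2 * s) * t) := by ring
          _ ≤ A * 1 := by gcongr
          _ = A := by ring
      have h5 : (1 + t ^ (2 * s)) * r ≤ 2 * A := by nlinarith
      have : 0 ≤ (1 + t ^ (2 * s)) * r := by positivity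
      nlinarith
  · have hN1 : (1:ℝ) ≤ t ^ N := one_le_pow₀ ht
    have h2 : t ^ 2 * r ≤ B := by
      refine le_trans ?_ hB
      rw [pow_add]
      nlinarith [mul_nonneg (sq_nonneg t) hr]
    have h1 : 1 ≤ t ^ 2 := by nlinarith
    constructor
    · nlinarith
    · have h3 : t ^ (2 * s) * t ^ 2 ≤ t ^ N := by
        rw [← Real.rpow_natCast, ← Real.rpow_natCast, ← Real.rpow_add hp]
        exact Real.rpow_le_rpow_of_exponent_le ht (by push_cast; linarith)
      have h4 : t ^ (2 * s) * r * t ^ 2 ≤ B := by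
        have : t ^ (2 * s) * t ^ 2 * r ≤ t ^ N * r := by gcongr
        have h6 : t ^ N * r ≤ t ^ (N + 2) * r := by
          gcongr
          omega
        nlinarith
      have : 0 ≤ t ^ (2 * s) * r := by positivity
      nlinarith

lemma poisson (a : ℝ) (ha : a ≠ 0) :
    ∫⁻ t : ℝ, ENNReal.ofReal (|a| / (a ^ 2 + t ^ 2)) = ENNReal.ofReal Real.pi := by
  have hi : Integrable fun t : ℝ => (1 + (a⁻¹ * t) ^ 2)⁻¹ :=
    integrable_inv_one_add_sq.comp_mul_left' (inv_ne_zero ha)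
  have he : ∀ t : ℝ, |a| / (a ^ 2 + t ^ 2) = |a|⁻¹ * (1 + (a⁻¹ * t) ^ 2)⁻¹ := by
    intro t
    have h1 : a ^ 2 = |a| ^ 2 := (sq_abs a).symm
    have h2 : (a⁻¹ * t) ^ 2 = t ^ 2 / |a| ^ 2 := by rw [mul_pow, inv_pow, h1]; ring
    have : 0 < |a| := abs_pos.mpr ha
    rw [h1, h2]; field_simp
  simp_rw [he]
  rw [← ofReal_integral_eq_lintegral_ofReal (hi.const_mul _)
    (Eventually.of_forall fun t => by positivity), integral_const_mul,
    Measure.integral_comp_mul_left (fun t => (1 + t ^ 2)⁻¹), integral_univ_inv_one_add_sq]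
  have : 0 < |a| := abs_pos.mpr ha
  congr 1
  rw [inv_inv, smul_eq_mul]; field_simp

lemma weight (s a b η : ℝ) (hη : η ≠ 0) :
    jb2 (a, η * b) ^ (2 * s) ≤ (1 + |η| ^ (2 * s)) * jb2 (a, b) ^ (2 * s) := by
  have hj : ∀ x : ℝ, jb2 (a, x) ^ (2 * s) = (1 + a ^ 2 + x ^ 2) ^ s := by
    intro x
    unfold jb2
    simp only
    rw [Real.sqrt_eq_rpow, ← Real.rpow_mul (by positivity)]
    congr 1; ring
  have hp : 0 < |η| := abs_pos.mpr hη
  have he : |η| ^ (2 * s) = (|η| ^ 2) ^ s := by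
    rw [Real.rpow_mul hp.le]; norm_num
  rw [hj, hj, he, mul_pow, ← sq_abs η]
  generalize |η| = t at *
  have h1 : 0 ≤ (1 + a ^ 2 + b ^ 2) ^ s := by positivity
  have h2 : 0 ≤ (t ^ 2) ^ s := by positivity
  have h3 : (1 + a ^ 2 + t ^ 2 * b ^ 2) ^ s ≤ (1 + a ^ 2 + b ^ 2) ^ s ∨
      (1 + a ^ 2 + t ^ 2 * b ^ 2) ^ s ≤ (t ^ 2) ^ s * (1 + a ^ 2 + b ^ 2) ^ s := by
    rw [← Real.mul_rpow (by positivity) (by positivity)]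
    rcases le_total 0 s with hs | hs <;> rcases le_total (t ^ 2) 1 with ht | ht
    · left; apply Real.rpow_le_rpow (by positivity) _ hs
      nlinarith [sq_nonneg b]
    · right; apply Real.rpow_le_rpow (by positivity) _ hs
      nlinarith [sq_nonneg b, sq_nonneg a]
    · right; apply Real.rpow_le_rpow_of_nonpos (by positivity) _ hs
      nlinarith [sq_nonneg b, sq_nonneg a]
    · left; apply Real.rpow_le_rpow_of_nonpos (by positivity) _ hs
      nlinarith [sq_nonneg b]
  rcases h3 with h3 | h3 <;> nlinarith [mul_nonneg h1 h2]

lemma schw_bound (g : SchwartzMap (ℝ × ℝ) ℂ) :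
    ∃ C, 0 ≤ C ∧ ∀ x y, ‖g (x, y)‖ ≤ C * ((1 + x ^ 2)⁻¹ * (1 + y ^ 2)⁻¹) := by
  refine ⟨2 ^ 4 * (Finset.Iic (4, 0)).sup (fun m => SchwartzMap.seminorm ℝ m.1 m.2) g,
    mul_nonneg (by norm_num) (apply_nonneg _ _), fun x y => ?_⟩
  have h := SchwartzMap.one_add_le_sup_seminorm_apply (𝕜 := ℝ) (m := (4, 0)) (k := 4) (n := 0)
    le_rfl le_rfl g (x, y)
  rw [norm_iteratedFDeriv_zero] at h
  simp only at h
  rw [← mul_inv, ← div_eq_mul_inv, le_div_iff₀ (by positivity), mul_comm]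
  refine le_trans ?_ h
  gcongr
  have hx : |x| ≤ ‖(x, y)‖ := le_max_left _ _
  have hy : |y| ≤ ‖(x, y)‖ := le_max_right _ _
  have hx2 : 1 + x ^ 2 ≤ (1 + ‖(x, y)‖) ^ 2 := by
    rw [← sq_abs x]; nlinarith [abs_nonneg x]
  have hy2 : 1 + y ^ 2 ≤ (1 + ‖(x, y)‖) ^ 2 := by
    rw [← sq_abs y]; nlinarith [abs_nonneg y]
  calc (1 + x ^ 2) * (1 + y ^ 2) ≤ (1 + ‖(x, y)‖) ^ 2 * (1 + ‖(x, y)‖) ^ 2 := by gcongr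
    _ = _ := by ring

lemma slice_int (g : SchwartzMap (ℝ × ℝ) ℂ) (x : ℝ) : Integrable (fun y => g (x, y)) := by
  obtain ⟨C, hC, h⟩ := schw_bound g
  refine Integrable.mono' ((integrable_inv_one_add_sq.const_mul (1 + x ^ 2)⁻¹).const_mul C)
    (Continuous.aestronglyMeasurable (by fun_prop)) ?_
  filter_upwards with y
  exact h x y

noncomputable def GG (g : SchwartzMap (ℝ × ℝ) ℂ) (x ξ : ℝ) : ℂ :=
  ∫ y : ℝ, Complex.exp (-Complex.I * ((y:ℂ) * (ξ:ℂ))) * g (x, y)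

lemma GG_bound0 (g : SchwartzMap (ℝ × ℝ) ℂ) :
    ∃ C, 0 ≤ C ∧ ∀ x ξ, ‖GG g x ξ‖ ≤ C * (1 + x ^ 2)⁻¹ := by
  obtain ⟨C, hC, h⟩ := schw_bound g
  refine ⟨C * Real.pi, by positivity, fun x ξ => ?_⟩
  have : C * Real.pi * (1 + x ^ 2)⁻¹ = ∫ y : ℝ, C * ((1 + x ^ 2)⁻¹ * (1 + y ^ 2)⁻¹) := by
    rw [integral_const_mul, integral_const_mul, integral_univ_inv_one_add_sq]; ring
  rw [this]
  refine norm_integral_le_of_norm_le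
    ((integrable_inv_one_add_sq.const_mul (1 + x ^ 2)⁻¹).const_mul C) ?_
  filter_upwards with y
  rw [norm_mul, norm_ee, one_mul]
  exact h x y

lemma GG_deriv (g : SchwartzMap (ℝ × ℝ) ℂ) :
    ∃ g' : SchwartzMap (ℝ × ℝ) ℂ, ∀ x ξ, ‖GG g' x ξ‖ = |ξ| * ‖GG g x ξ‖ := by
  refine ⟨LineDeriv.lineDerivOp ((0:ℝ), (1:ℝ)) g, fun x ξ => ?_⟩
  unfold GG
  rw [ibp (f := fun y => g (x, y)) _ (slice_int g x) (slice_int _ x) ξ]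
  · simp
  · intro y
    rw [SchwartzMap.lineDerivOp_apply_eq_fderiv]
    have h1 : HasDerivAt (fun y : ℝ => (x, y)) ((0:ℝ), (1:ℝ)) y :=
      (hasDerivAt_const y x).prodMk (hasDerivAt_id y)
    exact (g.differentiableAt.hasFDerivAt (x := (x, y))).comp_hasDerivAt y h1

lemma GG_bound (g : SchwartzMap (ℝ × ℝ) ℂ) :
    ∃ C, 0 ≤ C ∧ ∀ x ξ, ‖GG g x ξ‖ ≤ C * ((1 + x ^ 2)⁻¹ * (1 + ξ ^ 2)⁻¹) := by
  obtain ⟨g1, h1⟩ := GG_deriv g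
  obtain ⟨g2, h2⟩ := GG_deriv g1
  obtain ⟨A, hA0, hA⟩ := GG_bound0 g
  obtain ⟨B, hB0, hB⟩ := GG_bound0 g2
  refine ⟨A + B, by positivity, fun x ξ => ?_⟩
  have hB := hB x ξ
  have hA := hA x ξ
  rw [h2, h1] at hB
  rw [← mul_assoc, ← div_eq_mul_inv _ (1 + ξ ^ 2), le_div_iff₀ (by positivity)]
  have : |ξ| * (|ξ| * ‖GG g x ξ‖) = ξ ^ 2 * ‖GG g x ξ‖ := by rw [← sq_abs ξ]; ring
  nlinarith

lemma GG_meas (g : SchwartzMap (ℝ × ℝ) ℂ) :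
    StronglyMeasurable (fun q : ℝ × ℝ => GG g q.1 q.2) := by
  unfold GG
  refine StronglyMeasurable.integral_prod_right
    (f := fun (q : ℝ × ℝ) (y : ℝ) => Complex.exp (-Complex.I * ((y:ℂ) * (q.2:ℂ))) * g (q.1, y)) ?_
  refine Continuous.stronglyMeasurable ?_
  unfold Function.uncurry
  fun_prop

lemma ee_split (a b c d : ℝ) : Complex.exp (-Complex.I * ((a:ℂ) * c + b * d)) =
    Complex.exp (-Complex.I * ((a:ℂ) * c)) * Complex.exp (-Complex.I * ((b:ℂ) * d)) := by
  rw [← Complex.exp_add]; congr 1; ring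

lemma FT2_GG (g : SchwartzMap (ℝ × ℝ) ℂ) (a ξ : ℝ) :
    (∫ x : ℝ, Complex.exp (-Complex.I * ((x:ℂ) * (a:ℂ))) * GG g x ξ) =
      FT2 (fun p => g p) (a, ξ) := by
  unfold FT2
  simp only
  rw [Measure.volume_eq_prod, integral_prod]
  · congr 1; ext x
    unfold GG
    rw [← integral_const_mul]
    congr 1; ext y
    rw [ee_split, mul_assoc]
  · rw [← Measure.volume_eq_prod]
    refine g.integrable.mono (Continuous.aestronglyMeasurable (by fun_prop)) ?_
    filter_upwards with p
    rw [ee_split, norm_mul, norm_mul, norm_ee, norm_ee, one_mul, one_mul]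

lemma FT2_cont (g : SchwartzMap (ℝ × ℝ) ℂ) : Continuous (FT2 (fun p => g p)) := by
  unfold FT2
  refine continuous_of_dominated (bound := fun u => ‖g u‖) ?_ ?_ g.integrable.norm ?_
  · intro η
    exact Continuous.aestronglyMeasurable (by fun_prop)
  · intro η
    filter_upwards with u
    rw [ee_split, norm_mul, norm_mul, norm_ee, norm_ee, one_mul, one_mul]
  · filter_upwards with u
    fun_prop

lemma FT2_int (g : SchwartzMap (ℝ × ℝ) ℂ) (a : ℝ) :
    Integrable (fun ξ => FT2 (fun p => g p) (a, ξ)) := by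
  obtain ⟨C, hC, h⟩ := GG_bound g
  refine Integrable.mono' (integrable_inv_one_add_sq.const_mul (C * Real.pi))
    (((FT2_cont g).comp (by fun_prop)).aestronglyMeasurable) ?_
  filter_upwards with ξ
  rw [← FT2_GG]
  have : C * Real.pi * (1 + ξ ^ 2)⁻¹ = ∫ x : ℝ, C * ((1 + ξ ^ 2)⁻¹ * (1 + x ^ 2)⁻¹) := by
    rw [integral_const_mul, integral_const_mul, integral_univ_inv_one_add_sq]; ring
  rw [this]
  refine norm_integral_le_of_norm_le
    ((integrable_inv_one_add_sq.const_mul (1 + ξ ^ 2)⁻¹).const_mul C) ?_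
  filter_upwards with x
  rw [norm_mul, norm_ee, one_mul, mul_comm (1 + ξ ^ 2)⁻¹]
  exact h x ξ

lemma schw1_bdd (ρ : SchwartzMap ℝ ℝ) : ∃ M, 0 ≤ M ∧ ∀ x, ‖ρ x‖ ≤ M :=
  ⟨SchwartzMap.seminorm ℝ 0 0 ρ, apply_nonneg _ _, fun x => SchwartzMap.norm_le_seminorm ℝ ρ x⟩

lemma trunc (ρ : SchwartzMap ℝ ℝ) (g : SchwartzMap (ℝ × ℝ) ℂ) (a b : ℝ) (n : ℕ) :
    (∫ p : ℝ × ℝ in Set.univ ×ˢ Set.Ioc (-(n:ℝ)) n,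
      Complex.exp (-Complex.I * ((p.1:ℂ) * a + p.2 * b)) *
        ∫ ξ : ℝ, (ρ (ξ * p.2) : ℂ) * GG g p.1 ξ) =
    ∫ ξ : ℝ, (∫ y in (-(n:ℝ))..n, Complex.exp (-Complex.I * ((y:ℂ) * b)) * (ρ (ξ * y) : ℂ)) *
      FT2 (fun p => g p) (a, ξ) := by
  obtain ⟨M, hM0, hM⟩ := schw1_bdd ρ
  obtain ⟨C, hC, h⟩ := GG_bound g
  have hm : (volume : Measure (ℝ × ℝ)).restrict (Set.univ ×ˢ Set.Ioc (-(n:ℝ)) n) =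
      (volume : Measure ℝ).prod (volume.restrict (Set.Ioc (-(n:ℝ)) n)) := by
    rw [Measure.volume_eq_prod, ← Measure.prod_restrict, Measure.restrict_univ]
  rw [hm]
  simp_rw [← integral_const_mul]
  rw [integral_integral_swap]
  · congr 1; ext ξ
    rw [← FT2_GG, mul_comm, intervalIntegral.integral_of_le (by linarith [Nat.cast_nonneg (α := ℝ) n]),
      ← integral_prod_mul]
    congr 1; ext p
    rw [ee_split]; ring
  · have hi : Integrable (fun q : (ℝ × ℝ) × ℝ =>
        (((1 + q.1.1 ^ 2)⁻¹ * (M * C)) * (1 + q.2 ^ 2)⁻¹))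
        (((volume : Measure ℝ).prod (volume.restrict (Set.Ioc (-(n:ℝ)) n))).prod volume) := by
      refine Integrable.mul_prod (f := fun p : ℝ × ℝ => (1 + p.1 ^ 2)⁻¹ * (M * C))
        (g := fun x : ℝ => (1 + x ^ 2)⁻¹) ?_ integrable_inv_one_add_sq
      exact Integrable.mul_prod (f := fun x : ℝ => (1 + x ^ 2)⁻¹) (g := fun _ : ℝ => M * C)
        integrable_inv_one_add_sq (integrable_const _)
    refine hi.mono' ?_ ?_
    · have h1 : StronglyMeasurable (fun q : (ℝ × ℝ) × ℝ => GG g q.1.1 q.2) :=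
        (GG_meas g).comp_measurable (g := fun q : (ℝ × ℝ) × ℝ => (q.1.1, q.2)) (by fun_prop)
      have h2 : Continuous (fun q : (ℝ × ℝ) × ℝ =>
        Complex.exp (-Complex.I * ((q.1.1:ℂ) * a + q.1.2 * b))) := by fun_prop
      have h3 : Continuous (fun q : (ℝ × ℝ) × ℝ => (ρ (q.2 * q.1.2) : ℂ)) := by fun_prop
      exact (h2.stronglyMeasurable.mul (h3.stronglyMeasurable.mul h1)).aestronglyMeasurable
    · filter_upwards with q
      simp only [Function.uncurry]
      rw [ee_split, norm_mul, norm_mul, norm_ee, norm_ee, one_mul, one_mul, norm_mul,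
        Complex.norm_real]
      calc _ ≤ M * (C * ((1 + q.1.1 ^ 2)⁻¹ * (1 + q.2 ^ 2)⁻¹)) := by
            gcongr
            · exact hM _
            · exact h _ _
        _ = _ := by ring

lemma rho_scale_int (ρ : SchwartzMap ℝ ℝ) {ξ : ℝ} (hξ : ξ ≠ 0) :
    Integrable (fun y => (ρ (ξ * y) : ℂ)) :=
  (ρ.integrable.comp_mul_left' hξ).ofReal

lemma kn_bound (ρ : SchwartzMap ℝ ℝ) (b : ℝ) (hb : b ≠ 0) : ∃ C, ∀ (n : ℕ) (ξ : ℝ), ξ ≠ 0 →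
    ‖∫ y in (-(n:ℝ))..n, Complex.exp (-Complex.I * ((y:ℂ) * b)) * (ρ (ξ * y) : ℂ)‖ ≤ C := by
  obtain ⟨M, hM0, hM⟩ := schw1_bdd ρ
  set ρ' := SchwartzMap.derivCLM ℝ ℝ ρ with hρ'
  refine ⟨(2 * M + ∫ u, ‖ρ' u‖) / |b|, fun n ξ hξ => ?_⟩
  have hd : ∀ y : ℝ, HasDerivAt (fun y : ℝ => (ρ (ξ * y) : ℂ)) ((ρ' (ξ * y) * ξ : ℝ) : ℂ) y := by
    intro y
    refine HasDerivAt.ofReal_comp ?_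
    have h1 : HasDerivAt (fun y : ℝ => ξ * y) ξ y := by
      simpa using (hasDerivAt_id y).const_mul ξ
    have h2 : HasDerivAt ρ (ρ' (ξ * y)) (ξ * y) := by
      simpa [hρ'] using ρ.differentiableAt.hasDerivAt (x := ξ * y)
    exact h2.comp y h1
  have hc1 : Continuous (fun y : ℝ => ((ρ' (ξ * y) * ξ : ℝ) : ℂ)) := by fun_prop
  have key := intervalIntegral.integral_mul_deriv_eq_deriv_mul (a := -(n:ℝ)) (b := n)
    (u := fun y : ℝ => (ρ (ξ * y) : ℂ)) (fun y _ => hd y) (fun y _ => deriv_ee b y)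
    (hc1.intervalIntegrable _ _) (Continuous.intervalIntegrable (by fun_prop) _ _)
  have e : ∀ y : ℝ, (ρ (ξ * y) : ℂ) * (Complex.exp (-Complex.I * ((y:ℂ) * (b:ℂ))) *
      (-Complex.I * b)) = (-Complex.I * b) *
      (Complex.exp (-Complex.I * ((y:ℂ) * b)) * (ρ (ξ * y) : ℂ)) := fun y => by ring
  simp_rw [e] at key
  rw [intervalIntegral.integral_const_mul] at key
  have key2 := congrArg norm key
  rw [norm_mul] at key2
  have hbn : ‖-Complex.I * (b:ℂ)‖ = |b| := by simp
  rw [hbn] at key2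
  rw [le_div_iff₀ (abs_pos.mpr hb), mul_comm, key2]
  have hn : -(n:ℝ) ≤ n := by linarith [Nat.cast_nonneg (α := ℝ) n]
  have hI : ‖∫ y in (-(n:ℝ))..n, ((ρ' (ξ * y) * ξ : ℝ) : ℂ) *
      Complex.exp (-Complex.I * ((y:ℂ) * b))‖ ≤ ∫ u, ‖ρ' u‖ := by
    have hi : Integrable (fun y => ‖ρ' (ξ * y)‖ * |ξ|) :=
      ((ρ'.integrable.comp_mul_left' hξ).norm).mul_const _
    have h3 : ∫ y, ‖ρ' (ξ * y)‖ * |ξ| = ∫ u, ‖ρ' u‖ := by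
      rw [integral_mul_const, Measure.integral_comp_mul_left (fun u => ‖ρ' u‖), abs_inv,
        smul_eq_mul]
      have := abs_pos.mpr hξ
      field_simp
    rw [← h3, intervalIntegral.integral_of_le hn]
    refine (norm_integral_le_of_norm_le hi.integrableOn ?_).trans
      (setIntegral_le_integral hi (Eventually.of_forall fun y => by positivity))
    filter_upwards with y
    rw [norm_mul, norm_ee, mul_one, Complex.norm_real, norm_mul, Real.norm_eq_abs ξ]
  refine (norm_sub_le _ _).trans ?_
  refine add_le_add ((norm_sub_le _ _).trans ?_) hI
  rw [norm_mul, norm_mul, norm_ee, norm_ee, Complex.norm_real, Complex.norm_real]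
  linarith [hM (ξ * n), hM (ξ * -n)]

lemma kernel_eq (ρ : SchwartzMap ℝ ℝ) (b ξ : ℝ) (hξ : ξ ≠ 0) :
    (∫ y : ℝ, Complex.exp (-Complex.I * ((y:ℂ) * b)) * (ρ (ξ * y) : ℂ)) =
      (|ξ|⁻¹ : ℝ) * rr ρ (b / ξ) := by
  have := Measure.integral_comp_mul_left
    (fun u : ℝ => Complex.exp (-Complex.I * ((u:ℂ) * ((b / ξ : ℝ) : ℂ))) * (ρ u : ℂ)) ξ
  rw [rr, ← abs_inv, ← Complex.real_smul, ← this]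
  congr 1; ext y
  congr 3
  push_cast
  have : (ξ:ℂ) ≠ 0 := by exact_mod_cast hξ
  field_simp

lemma rep (ρ : SchwartzMap ℝ ℝ) (g : SchwartzMap (ℝ × ℝ) ℂ) (a b : ℝ) (hb : b ≠ 0)
    (hi : Integrable (fun p : ℝ × ℝ => Complex.exp (-Complex.I * ((p.1:ℂ) * a + p.2 * b)) *
        ∫ ξ : ℝ, (ρ (ξ * p.2) : ℂ) * GG g p.1 ξ)) :
    (∫ p : ℝ × ℝ, Complex.exp (-Complex.I * ((p.1:ℂ) * a + p.2 * b)) *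
        ∫ ξ : ℝ, (ρ (ξ * p.2) : ℂ) * GG g p.1 ξ) =
    ∫ ξ : ℝ, ((|ξ|⁻¹ : ℝ) * rr ρ (b / ξ)) * FT2 (fun p => g p) (a, ξ) := by
  have hU : (⋃ n : ℕ, (Set.univ : Set ℝ) ×ˢ Set.Ioc (-(n:ℝ)) n) = Set.univ := by
    refine Set.eq_univ_of_forall fun p => ?_
    obtain ⟨n, hn⟩ := exists_nat_gt |p.2|
    rw [abs_lt] at hn
    exact Set.mem_iUnion.mpr ⟨n, ⟨trivial, hn.1, hn.2.le⟩⟩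
  have h1 := tendsto_setIntegral_of_monotone (μ := volume)
    (s := fun n : ℕ => (Set.univ : Set ℝ) ×ˢ Set.Ioc (-(n:ℝ)) n)
    (fun n => MeasurableSet.univ.prod measurableSet_Ioc)
    (fun m n hmn => by
      have : (m:ℝ) ≤ n := by exact_mod_cast hmn
      exact Set.prod_mono le_rfl (Set.Ioc_subset_Ioc (by linarith) this))
    (by rw [hU]; exact hi.integrableOn)
  rw [hU, setIntegral_univ] at h1
  simp_rw [trunc] at h1
  refine tendsto_nhds_unique h1 ?_
  obtain ⟨C, hC⟩ := kn_bound ρ b hb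
  have hne : ∀ᵐ ξ : ℝ, ξ ≠ 0 := by simp [ae_iff]
  refine tendsto_integral_of_dominated_convergence
    (fun ξ => C * ‖FT2 (fun p => g p) (a, ξ)‖) ?_ ((FT2_int g a).norm.const_mul C) ?_ ?_
  · intro n
    refine AEStronglyMeasurable.mul ?_ (FT2_int g a).1
    refine Continuous.aestronglyMeasurable ?_
    refine intervalIntegral.continuous_parametric_intervalIntegral_of_continuous'
      (f := fun (ξ y : ℝ) => Complex.exp (-Complex.I * ((y:ℂ) * b)) * (ρ (ξ * y) : ℂ)) ?_ _ _
    unfold Function.uncurry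
    fun_prop
  · intro n
    filter_upwards [hne] with ξ hξ
    rw [norm_mul]
    gcongr
    exact hC n ξ hξ
  · filter_upwards [hne] with ξ hξ
    refine Tendsto.mul_const _ ?_
    rw [← kernel_eq ρ b ξ hξ]
    exact intervalIntegral_tendsto_integral (int_ee (rho_scale_int ρ hξ) b)
      (tendsto_neg_atTop_atBot.comp tendsto_natCast_atTop_atTop) tendsto_natCast_atTop_atTop

lemma cs_lint {k h : ℝ → ℝ≥0∞} (hk : Measurable k) (hh : Measurable h) :
    (∫⁻ x, k x * h x) ^ 2 ≤ (∫⁻ x, k x) * ∫⁻ x, k x * h x ^ 2 := by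
  have hsq : ∀ x : ℝ≥0∞, (x ^ (1 / 2 : ℝ)) ^ (2:ℝ) = x := fun x => by
    rw [← ENNReal.rpow_mul]; norm_num
  have hsq' : ∀ x : ℝ≥0∞, x ^ (1 / 2 : ℝ) * x ^ (1 / 2 : ℝ) = x := fun x => by
    rw [← sq, ← ENNReal.rpow_ofNat, hsq]
  have h1 := ENNReal.lintegral_mul_le_Lp_mul_Lq volume Real.HolderConjugate.two_two
    (f := fun x => k x ^ (1 / 2 : ℝ)) (g := fun x => k x ^ (1 / 2 : ℝ) * h x)
    (by fun_prop) (by fun_prop)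
  have e1 : ∀ x, ((fun x => k x ^ (1 / 2 : ℝ)) * fun x => k x ^ (1 / 2 : ℝ) * h x) x
      = k x * h x := fun x => by
    simp only [Pi.mul_apply]
    rw [← mul_assoc, hsq']
  have e2 : ∀ x, (k x ^ (1 / 2 : ℝ) * h x) ^ (2:ℝ) = k x * h x ^ 2 := fun x => by
    rw [ENNReal.mul_rpow_of_nonneg _ _ (by norm_num), hsq, ENNReal.rpow_ofNat]
  simp only [e1, e2, hsq] at h1
  calc _ ≤ ((∫⁻ x, k x) ^ (1 / 2 : ℝ) * (∫⁻ x, k x * h x ^ 2) ^ (1 / 2 : ℝ)) ^ 2 := by gcongr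
    _ = _ := by
      rw [mul_pow, ← ENNReal.rpow_ofNat, ← ENNReal.rpow_ofNat, hsq, hsq]

noncomputable def Wt (s : ℝ) (θ : ℝ × ℝ) : ℝ≥0∞ := ENNReal.ofReal (jb2 θ ^ (2 * s))

lemma Wt_meas (s : ℝ) : Measurable (Wt s) := by
  unfold Wt jb2
  fun_prop

lemma jb2_nonneg (θ : ℝ × ℝ) : 0 ≤ jb2 θ := Real.sqrt_nonneg _

lemma Hs_eq (s : ℝ) (u : ℝ × ℝ → ℂ) :
    HsNormSq s u = ∫⁻ θ, Wt s θ * ‖FT2 u θ‖ₑ ^ 2 := by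
  unfold HsNormSq Wt
  congr 1; ext θ
  rw [ENNReal.ofReal_mul (Real.rpow_nonneg (jb2_nonneg θ) _), ENNReal.ofReal_pow (norm_nonneg _),
    ofReal_norm]

noncomputable def kk (ρ : SchwartzMap ℝ ℝ) (b ξ : ℝ) : ℝ≥0∞ :=
  ENNReal.ofReal (|ξ|⁻¹ * ‖rr ρ (b / ξ)‖)

lemma kk_meas (ρ : SchwartzMap ℝ ℝ) (b : ℝ) : Measurable (kk ρ b) := by
  have := (rr_cont ρ).measurable
  unfold kk
  fun_prop

noncomputable def Ps (a t : ℝ) : ℝ≥0∞ := ENNReal.ofReal (|a| / (a ^ 2 + t ^ 2))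

lemma FT2T_bound (ρ : SchwartzMap ℝ ℝ) (g : SchwartzMap (ℝ × ℝ) ℂ) (a b : ℝ) (hb : b ≠ 0) :
    ‖FT2 (fun p : ℝ × ℝ => ∫ ξ : ℝ, (ρ (ξ * p.2) : ℂ) * GG g p.1 ξ) (a, b)‖ₑ ≤
      ∫⁻ ξ, kk ρ b ξ * ‖FT2 (fun p => g p) (a, ξ)‖ₑ := by
  unfold FT2
  simp only
  by_cases hi : Integrable (fun p : ℝ × ℝ => Complex.exp (-Complex.I * ((p.1:ℂ) * a + p.2 * b)) *
        ∫ ξ : ℝ, (ρ (ξ * p.2) : ℂ) * GG g p.1 ξ)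
  · rw [rep ρ g a b hb hi]
    refine (enorm_integral_le_lintegral_enorm _).trans (le_of_eq ?_)
    congr 1; ext ξ
    rw [enorm_mul]
    congr 1
    rw [kk, ← ofReal_norm, norm_mul, Complex.norm_real, norm_inv, norm_abs_eq_norm,
      Real.norm_eq_abs]
  · rw [integral_undef hi]; simp

lemma main_bound (ρ : SchwartzMap ℝ ℝ) (h0 : (∫ x : ℝ, ρ x) = 0) (s : ℝ) (hs : -(1 / 2) ≤ s) :
    ∃ C > 0, ∀ g : SchwartzMap (ℝ × ℝ) ℂ,
      HsNormSq s (fun p : ℝ × ℝ => ∫ ξ : ℝ, (ρ (ξ * p.2) : ℂ) * GG g p.1 ξ) ≤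
        ENNReal.ofReal C * HsNormSq s (fun p => g p) := by
  obtain ⟨C, hC0, hC⟩ := rr_bound ρ h0 s hs
  have hne : ∀ᵐ ξ : ℝ, ξ ≠ 0 := by simp [ae_iff]
  have hπ := Real.pi_pos
  refine ⟨C * Real.pi * (C * Real.pi), by positivity, fun g => ?_⟩
  have hk : ∀ b, b ≠ 0 → ∫⁻ ξ, kk ρ b ξ ≤ ENNReal.ofReal (C * Real.pi) := by
    intro b hb
    rw [ENNReal.ofReal_mul hC0.le, ← poisson b hb, ← lintegral_const_mul _ (by fun_prop)]
    refine lintegral_mono_ae ?_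
    filter_upwards [hne] with ξ hξ
    rw [← ENNReal.ofReal_mul hC0.le]
    refine ENNReal.ofReal_le_ofReal ?_
    have h1 := (hC (b / ξ) (div_ne_zero hb hξ)).1
    have hp := abs_pos.mpr hξ
    calc _ ≤ |ξ|⁻¹ * (C * (|b / ξ| / (1 + (b / ξ) ^ 2))) := by gcongr
      _ = _ := by
        rw [abs_div, div_pow, ← sq_abs ξ]
        field_simp
        ring
  have hw : ∀ a b ξ, b ≠ 0 → ξ ≠ 0 →
      Wt s (a, b) * kk ρ b ξ ≤ ENNReal.ofReal C * (Wt s (a, ξ) * Ps ξ b) := by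
    intro a b ξ hb hξ
    have h1 := (hC (b / ξ) (div_ne_zero hb hξ)).2
    have h2 := weight s a ξ (b / ξ) (div_ne_zero hb hξ)
    rw [div_mul_cancel₀ _ hξ] at h2
    have hp := abs_pos.mpr hξ
    have hj : 0 ≤ jb2 (a, ξ) ^ (2 * s) := Real.rpow_nonneg (jb2_nonneg _) _
    have hj' : 0 ≤ jb2 (a, b) ^ (2 * s) := Real.rpow_nonneg (jb2_nonneg _) _
    unfold Wt kk Ps
    rw [← ENNReal.ofReal_mul hj, ← ENNReal.ofReal_mul hj', ← ENNReal.ofReal_mul hC0.le]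
    refine ENNReal.ofReal_le_ofReal ?_
    calc _ ≤ (1 + |b / ξ| ^ (2 * s)) * jb2 (a, ξ) ^ (2 * s) * (|ξ|⁻¹ * ‖rr ρ (b / ξ)‖) := by
          gcongr
      _ = jb2 (a, ξ) ^ (2 * s) * |ξ|⁻¹ * ((1 + |b / ξ| ^ (2 * s)) * ‖rr ρ (b / ξ)‖) := by ring
      _ ≤ jb2 (a, ξ) ^ (2 * s) * |ξ|⁻¹ * (C * (1 / (1 + (b / ξ) ^ 2))) := by gcongr
      _ = _ := by
        rw [div_pow, ← sq_abs ξ]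
        field_simp
  rw [Hs_eq, Hs_eq]
  have hF : Measurable (fun θ : ℝ × ℝ => ‖FT2 (fun p => g p) θ‖ₑ) :=
    (FT2_cont g).measurable.enorm
  have hW := Wt_meas s
  have hP : Measurable (fun q : ℝ × ℝ => Ps q.1 q.2) := by unfold Ps; fun_prop
  set F : ℝ × ℝ → ℝ≥0∞ := fun θ => ‖FT2 (fun p => g p) θ‖ₑ with hFdef
  set D := ENNReal.ofReal (C * Real.pi) * ENNReal.ofReal C with hD
  have hmeas : Measurable (fun q : (ℝ × ℝ) × ℝ =>
      Wt s (q.1.1, q.2) * F (q.1.1, q.2) ^ 2 * Ps q.2 q.1.2) := by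
    have m1 : Measurable (fun q : (ℝ × ℝ) × ℝ => (q.1.1, q.2)) := by fun_prop
    have m2 : Measurable (fun q : (ℝ × ℝ) × ℝ => (q.2, q.1.2)) := by fun_prop
    exact ((hW.comp m1).mul ((hF.comp m1).pow_const 2)).mul (hP.comp m2)
  have step1 : (∫⁻ θ : ℝ × ℝ, Wt s θ *
      ‖FT2 (fun p : ℝ × ℝ => ∫ ξ : ℝ, (ρ (ξ * p.2) : ℂ) * GG g p.1 ξ) θ‖ₑ ^ 2) ≤
      ∫⁻ θ : ℝ × ℝ, D * ∫⁻ ξ, Wt s (θ.1, ξ) * F (θ.1, ξ) ^ 2 * Ps ξ θ.2 := by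
    have hne2 : ∀ᵐ θ : ℝ × ℝ, θ.2 ≠ 0 := by
      rw [Measure.volume_eq_prod]
      exact Measure.quasiMeasurePreserving_snd.ae hne
    refine lintegral_mono_ae ?_
    filter_upwards [hne2] with θ hθ
    obtain ⟨a, b⟩ := θ
    simp only at hθ ⊢
    have hFa : Measurable (fun ξ => F (a, ξ)) := hF.comp (by fun_prop)
    have hWa : Measurable (fun ξ => Wt s (a, ξ)) := hW.comp (by fun_prop)
    have hPa : Measurable (fun ξ => Ps ξ b) := by unfold Ps; fun_prop
    have hkm := kk_meas ρ b
    calc _ ≤ Wt s (a, b) * (∫⁻ ξ, kk ρ b ξ * F (a, ξ)) ^ 2 := by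
          gcongr
          exact FT2T_bound ρ g a b hθ
      _ ≤ Wt s (a, b) * (ENNReal.ofReal (C * Real.pi) * ∫⁻ ξ, kk ρ b ξ * F (a, ξ) ^ 2) := by
          gcongr
          refine (cs_lint hkm hFa).trans ?_
          gcongr
          exact hk b hθ
      _ = ENNReal.ofReal (C * Real.pi) * ∫⁻ ξ, Wt s (a, b) * (kk ρ b ξ * F (a, ξ) ^ 2) := by
          rw [lintegral_const_mul _ (by fun_prop)]; ring
      _ ≤ ENNReal.ofReal (C * Real.pi) *
          ∫⁻ ξ, ENNReal.ofReal C * (Wt s (a, ξ) * F (a, ξ) ^ 2 * Ps ξ b) := by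
          refine mul_le_mul_right (lintegral_mono_ae ?_) _
          filter_upwards [hne] with ξ hξ
          calc _ = Wt s (a, b) * kk ρ b ξ * F (a, ξ) ^ 2 := by ring
            _ ≤ ENNReal.ofReal C * (Wt s (a, ξ) * Ps ξ b) * F (a, ξ) ^ 2 := by
              exact mul_le_mul_left (hw a b ξ hθ hξ) _
            _ = _ := by ring
      _ = _ := by
          rw [lintegral_const_mul _ (by fun_prop), hD, mul_assoc]
  refine step1.trans ?_
  have hmi : Measurable (fun θ : ℝ × ℝ => ∫⁻ ξ, Wt s (θ.1, ξ) * F (θ.1, ξ) ^ 2 * Ps ξ θ.2) :=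
    hmeas.lintegral_prod_right'
  rw [lintegral_const_mul _ hmi, Measure.volume_eq_prod, lintegral_prod _ hmi.aemeasurable,
    lintegral_prod (fun θ => Wt s θ * F θ ^ 2) (by fun_prop)]
  have step2 : ∀ a : ℝ, (∫⁻ b, ∫⁻ ξ, Wt s (a, ξ) * F (a, ξ) ^ 2 * Ps ξ b) ≤
      ENNReal.ofReal Real.pi * ∫⁻ ξ, Wt s (a, ξ) * F (a, ξ) ^ 2 := by
    intro a
    have hFa : Measurable (fun ξ => F (a, ξ)) := hF.comp (by fun_prop)
    have hWa : Measurable (fun ξ => Wt s (a, ξ)) := hW.comp (by fun_prop)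
    rw [lintegral_lintegral_swap, ← lintegral_const_mul _ (by fun_prop)]
    · refine lintegral_mono_ae ?_
      filter_upwards [hne] with ξ hξ
      have hPa : Measurable (fun b => Ps ξ b) := by unfold Ps; fun_prop
      rw [lintegral_const_mul _ hPa]
      unfold Ps
      rw [poisson ξ hξ, mul_comm]
    · have m1 : Measurable (fun q : ℝ × ℝ => ((a, q.1), q.2)) := by fun_prop
      exact (hmeas.comp m1).aemeasurable
  calc _ ≤ D * ∫⁻ a, ENNReal.ofReal Real.pi * ∫⁻ ξ, Wt s (a, ξ) * F (a, ξ) ^ 2 := by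
        gcongr with a
        exact step2 a
    _ = _ := by
      rw [lintegral_const_mul, hD, ENNReal.ofReal_mul (by positivity : 0 ≤ C * Real.pi),
        ENNReal.ofReal_mul hC0.le]
      · ring
      · exact Measurable.lintegral_prod_right' (f := fun θ => Wt s θ * F θ ^ 2) (by fun_prop)

theorem stmt18 (ρ : SchwartzMap ℝ ℝ) (h0 : (∫ x : ℝ, ρ x) = 0)
    (h1 : (∫ x : ℝ, x * ρ x) = 0) (s : ℝ) (hs : -(1 / 2) ≤ s) :
    ∃ C > 0, ∀ g : SchwartzMap (ℝ × ℝ) ℂ,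
      HsNormSq s (fun p : ℝ × ℝ => ∫ ξ₂ : ℝ,
          (ρ (ξ₂ * p.2) : ℂ) * (∫ y : ℝ, Complex.exp (-Complex.I * (y * ξ₂)) * g (p.1, y))) ≤
        ENNReal.ofReal C * HsNormSq s (fun p => g p) := by
  exact main_bound ρ h0 s hs
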